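/- Let f_1,…,f_n be MRF (submodular dichotomous) valuations on a finite item set M, with the agents ordered 1,…,n. Then there exists a single non-redundant allocation A that simultaneously maximizes the welfare of every prefix of agents: for every i ∈ {1,…,n}, Σ_{j=1}^{i} |A_j| = W({1,…,i}), where W(S) denotes the maximum over all allocations B of Σ_{j∈S} f_j(B_j). -/

import Mathlib

open Finset
open scoped Classical

variable {n : ℕ} {I : Type*} [DecidableEq I] [Fintype I]

/-- An allocation assigns pairwise disjoint bundles of items to the agents
(items may remain unallocated). -/
def IsAllocation (A : Fin n → Finset I) : Prop :=
  ∀ i j : Fin n, i ≠ j → Disjoint (A i) (A j)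

/-- The vector of utilities of an allocation under a profile of valuations. -/
def util {α : Type*} (f : Fin n → Finset I → α) (A : Fin n → Finset I) : Fin n → α :=
  fun i => f i (A i)

/-- The entries of the vector `u`, sorted in nondecreasing order. -/
noncomputable def sortedVec {α : Type*} [LinearOrder α] (u : Fin n → α) : List α :=
  (Finset.univ.val.map u).sort (· ≤ ·)

/-- `u` Lorenz-dominates `v`: for each `k`, the sum of the `k` smallest entries of `u`
is at least the sum of the `k` smallest entries of `v`. -/
def LorenzGE {α : Type*} [LinearOrder α] [AddCommMonoid α] (u v : Fin n → α) : Prop :=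
  ∀ k : ℕ, ((sortedVec v).take k).sum ≤ ((sortedVec u).take k).sum

/-- A matroid rank function: a normalized submodular valuation with dichotomous marginals. -/
structure IsMRF (f : Finset I → ℕ) : Prop where
  empty : f ∅ = 0
  submod : ∀ S T : Finset I, S ⊆ T → ∀ a : I,
      f (insert a T) + f S ≤ f (insert a S) + f T
  dichot : ∀ (S : Finset I) (a : I), f (insert a S) = f S ∨ f (insert a S) = f S + 1

/-- Non-redundancy: removing any item from any agent's bundle strictly decreases its value. -/
def NonRedundant (f : Fin n → Finset I → ℕ) (A : Fin n → Finset I) : Prop :=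
  ∀ i : Fin n, ∀ a ∈ A i, f i ((A i).erase a) < f i (A i)

/-- A Lorenz dominating allocation. -/
def LorenzDominating (f : Fin n → Finset I → ℕ) (A : Fin n → Finset I) : Prop :=
  ∀ B : Fin n → Finset I, IsAllocation B → LorenzGE (util f A) (util f B)

/-- The σ-perturbed utilities: agent `i` gets `f i (A i) + σ(i)/n²`, where the priority
`σ(i)` ranges over `{1,…,n}`. -/
noncomputable def pUtil (σ : Equiv.Perm (Fin n)) (f : Fin n → Finset I → ℕ)
    (A : Fin n → Finset I) : Fin n → ℝ :=
  fun i => (f i (A i) : ℝ) + (((σ i : ℕ) : ℝ) + 1) / (n : ℝ) ^ 2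

/-- A σ-Lorenz dominating allocation. -/
def SigmaLorenzDom (σ : Equiv.Perm (Fin n)) (f : Fin n → Finset I → ℕ)
    (A : Fin n → Finset I) : Prop :=
  ∀ B : Fin n → Finset I, IsAllocation B → LorenzGE (pUtil σ f A) (pUtil σ f B)

/-- Restriction of a valuation to a subset `D` of the items. -/
def restrictVal (f : Finset I → ℕ) (D : Finset I) : Finset I → ℕ := fun S => f (S ∩ D)

/-- A partition of all the items into `n` (possibly empty) bundles. -/
def IsPartition (P : Fin n → Finset I) : Prop :=
  (∀ i j : Fin n, i ≠ j → Disjoint (P i) (P j)) ∧ ∀ a : I, ∃ j, a ∈ P j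

/-- An XOS valuation: the pointwise maximum of a finite nonempty family of
nonnegative additive valuations. -/
def IsXOS (f : Finset I → ℝ) : Prop :=
  ∃ (k : ℕ) (w : Fin (k + 1) → I → ℝ),
    (∀ t a, 0 ≤ w t a) ∧
    ∀ S : Finset I, f S = Finset.univ.sup' Finset.univ_nonempty (fun t => ∑ a ∈ S, w t a)

/-- A dichotomous valuation (real-valued version). -/
def IsDichotomousR (f : Finset I → ℝ) : Prop :=
  ∀ (S : Finset I) (a : I), f (insert a S) = f S ∨ f (insert a S) = f S + 1

/-- Envy-freeness up to one good. -/
def EF1 (f : Fin n → Finset I → ℝ) (A : Fin n → Finset I) : Prop :=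
  ∀ i j : Fin n, f i (A j) ≤ f i (A i) ∨ ∃ e ∈ A j, f i ((A j).erase e) ≤ f i (A i)

/-- The maximum welfare attainable by a set `S` of agents. -/
noncomputable def maxWelfare (f : Fin n → Finset I → ℕ) (S : Finset (Fin n)) : ℕ :=
  Finset.sup (Finset.univ.filter fun B : Fin n → Finset I => IsAllocation B)
    (fun B => ∑ j ∈ S, f j (B j))

/-- An allocation extended with index `none` for the set of unallocated items. -/
def extAlloc (A : Fin n → Finset I) : Option (Fin n) → Finset I
  | none => Finset.univ \ Finset.univ.biUnion A
  | some i => A i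

/-!
The heart of the matter is an exchange argument. Given independent bundles `A` (an allocation) and
`B`, an item `x ∈ B i` that `A` leaves unallocated can be added to `A i` at the cost of at most one
item outside `B i`, by the matroid augmentation property. This increases the overlap of `A i` with
`B i` and does not shrink `A i`. Hence an allocation of maximal overlap with `B`, among those whose
bundles are no smaller than those of a given one, covers all items of `B`.

Taking for `B` an optimal allocation for a coalition `S`, one reaches the maximum welfare of `S`
without shrinking the bundle of any member of `S`, so that no optimum already attained on a smaller
coalition inside `S` is lost. Prefixes, or any chain of coalitions, are thus handled from the
smallest to the largest.
-/

section Independent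

variable {α : Type*} [DecidableEq α] {f : Finset α → ℕ} {S T : Finset α}

/-- `S` is independent in the matroid with rank function `f`. -/
def IsIndep (f : Finset α → ℕ) (S : Finset α) : Prop := f S = #S

namespace IsMRF

lemma monotone (hf : IsMRF f) : Monotone f :=
  monotone_iff_forall_le_insert.mpr fun S a _ ↦ by
    rcases hf.dichot S a with h | h <;> omega

lemma apply_union_le_add_card (hf : IsMRF f) (S T : Finset α) : f (S ∪ T) ≤ f S + #T := by
  induction T using Finset.induction_on with
  | empty => simp
  | insert a T ha ih =>
    rw [union_insert, card_insert_of_notMem ha]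
    rcases hf.dichot (S ∪ T) a with h | h <;> omega

lemma apply_le_card (hf : IsMRF f) (S : Finset α) : f S ≤ #S := by
  simpa [hf.empty] using hf.apply_union_le_add_card ∅ S

lemma isIndep_empty (hf : IsMRF f) : IsIndep f ∅ := by
  simp [IsIndep, hf.empty]

lemma isIndep_of_subset (hf : IsMRF f) (hT : IsIndep f T) (hST : S ⊆ T) : IsIndep f S := by
  refine (hf.apply_le_card S).antisymm ?_
  have hcard : #(T \ S) + #S = f T := by rw [card_sdiff_add_card_eq_card hST, hT]
  have hrank : f T ≤ f S + #(T \ S) := by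
    simpa [union_sdiff_of_subset hST] using hf.apply_union_le_add_card S (T \ S)
  omega

lemma apply_union_eq_of_forall_insert (hf : IsMRF f) (h : ∀ a ∈ S, f (insert a T) = f T) :
    f (T ∪ S) = f T := by
  induction S using Finset.induction_on with
  | empty => simp
  | insert a S _ ih =>
    rw [forall_mem_insert] at h
    have hTS : f (T ∪ S) = f T := ih h.2
    have hsubmod := hf.submod T (T ∪ S) subset_union_left a
    have hmono := hf.monotone (subset_insert a (T ∪ S))
    rw [union_insert]
    omega

lemma isIndep_insert (hf : IsMRF f) (hS : IsIndep f S) {a : α} (ha : f (insert a S) ≠ f S) :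
    IsIndep f (insert a S) := by
  have haS : a ∉ S := fun haS ↦ ha (by rw [insert_eq_of_mem haS])
  rw [IsIndep, (hf.dichot S a).resolve_left ha, hS, card_insert_of_notMem haS]

lemma exists_basis_superset (hf : IsMRF f) (hS : IsIndep f S) (hST : S ⊆ T) :
    ∃ U, S ⊆ U ∧ U ⊆ T ∧ IsIndep f U ∧ #U = f T := by
  obtain ⟨U, hSU, hU⟩ := exists_le_maximal {U ∈ T.powerset | IsIndep f U} (a := S)
    (by simp [hST, hS])
  simp only [mem_filter, mem_powerset] at hU
  obtain ⟨hUT, hUindep⟩ := hU.prop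
  have hspan : ∀ a ∈ T, f (insert a U) = f U := fun a ha ↦ by
    by_contra hne
    have hle : insert a U ⊆ U := hU.le_of_ge
      ⟨insert_subset ha hUT, hf.isIndep_insert hUindep hne⟩ (subset_insert a U)
    exact hne (by rw [hle.antisymm (subset_insert a U)])
  refine ⟨U, hSU, hUT, hUindep, ?_⟩
  rw [← hUindep, ← hf.apply_union_eq_of_forall_insert hspan, union_eq_right.mpr hUT]

lemma exists_exchange (hf : IsMRF f) (hS : IsIndep f S) (hT : IsIndep f T) {x : α} (hx : x ∈ T) :
    ∃ U, insert x (S ∩ T) ⊆ U ∧ U ⊆ insert x S ∧ IsIndep f U ∧ #S ≤ #U := by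
  obtain ⟨U, hU, hUS, hUindep, hUcard⟩ := hf.exists_basis_superset
    (hf.isIndep_of_subset hT (insert_subset hx inter_subset_right))
    (insert_subset_insert x inter_subset_left)
  refine ⟨U, hU, hUS, hUindep, ?_⟩
  calc #S = f S := hS.symm
    _ ≤ f (insert x S) := hf.monotone (subset_insert x S)
    _ = #U := hUcard.symm

end IsMRF

end Independent

section Allocation

variable {α : Type*} {A B : Fin n → Finset α}

lemma isAllocation_empty : IsAllocation fun _ : Fin n ↦ (∅ : Finset α) :=
  fun _ _ _ ↦ disjoint_empty_left ∅

lemma IsAllocation.mono (hB : IsAllocation B) (hAB : ∀ i, A i ⊆ B i) : IsAllocation A :=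
  fun i j hij ↦ (hB i j hij).mono (hAB i) (hAB j)

lemma IsAllocation.update (hA : IsAllocation A) {i : Fin n} {T : Finset α}
    (hT : ∀ j ≠ i, Disjoint T (A j)) : IsAllocation (Function.update A i T) := by
  intro j k hjk
  rcases eq_or_ne j i with rfl | hj
  · simpa [hjk.symm] using hT k hjk.symm
  rcases eq_or_ne k i with rfl | hk
  · simpa [hj] using (hT j hj).symm
  · simpa [hj, hk] using hA j k hjk

variable {f : Fin n → Finset α → ℕ}

/-- An allocation giving each agent a bundle that is independent for her valuation. For matroid
rank functions these are the non-redundant allocations. -/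
structure IsIndepAllocation (f : Fin n → Finset α → ℕ) (A : Fin n → Finset α) : Prop where
  isAllocation : IsAllocation A
  isIndep : ∀ i, IsIndep (f i) (A i)

namespace IsIndepAllocation

variable [DecidableEq α]

lemma mono (hf : ∀ i, IsMRF (f i)) (hB : IsIndepAllocation f B) (hAB : ∀ i, A i ⊆ B i) :
    IsIndepAllocation f A :=
  ⟨hB.isAllocation.mono hAB, fun i ↦ (hf i).isIndep_of_subset (hB.isIndep i) (hAB i)⟩

lemma nonRedundant (hf : ∀ i, IsMRF (f i)) (hA : IsIndepAllocation f A) : NonRedundant f A := by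
  intro i a ha
  rw [(hf i).isIndep_of_subset (hA.isIndep i) (erase_subset a (A i)), hA.isIndep i]
  exact card_erase_lt_of_mem ha

lemma exists_update {i : Fin n} (hf : IsMRF (f i)) (hA : IsIndepAllocation f A) {T : Finset α}
    (hT : IsIndep (f i) T) {x : α} (hxT : x ∈ T) (hxA : ∀ j, x ∉ A j) :
    ∃ U ⊆ insert x (A i), IsIndepAllocation f (Function.update A i U) ∧
      #(A i) ≤ #U ∧ A i ∩ T ⊂ U ∩ T := by
  obtain ⟨U, hU, hUA, hUindep, hUcard⟩ := hf.exists_exchange (hA.isIndep i) hT hxT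
  obtain ⟨hxU, hAU⟩ := insert_subset_iff.mp hU
  refine ⟨U, hUA, ⟨hA.isAllocation.update fun j hj ↦ ?_, ?_⟩, hUcard, ?_⟩
  · exact disjoint_of_subset_left hUA
      (disjoint_insert_left.mpr ⟨hxA j, hA.isAllocation i j hj.symm⟩)
  · exact (Function.forall_update_iff A fun j S ↦ IsIndep (f j) S).mpr
      ⟨hUindep, fun j _ ↦ hA.isIndep j⟩
  · exact ssubset_iff.mpr ⟨x, fun hx ↦ hxA i (mem_of_mem_inter_left hx),
      insert_subset (mem_inter.mpr ⟨hxU, hxT⟩) (subset_inter hAU inter_subset_right)⟩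

lemma exists_card_le_and_covers (hf : ∀ i, IsMRF (f i)) (hA : IsIndepAllocation f A)
    (hB : ∀ i, IsIndep (f i) (B i)) :
    ∃ C, IsIndepAllocation f C ∧ (∀ j, C j ⊆ A j ∪ B j) ∧ (∀ j, #(A j) ≤ #(C j)) ∧
      ∀ i, ∀ x ∈ B i, ∃ j, x ∈ C j := by
  obtain ⟨C, hC, hmax⟩ := exists_max_image
    {C ∈ Fintype.piFinset fun j ↦ (A j ∪ B j).powerset |
      IsIndepAllocation f C ∧ ∀ j, #(A j) ≤ #(C j)}
    (fun C ↦ ∑ j, #(C j ∩ B j))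
    ⟨A, mem_filter.mpr ⟨Fintype.mem_piFinset.mpr fun j ↦ mem_powerset.mpr subset_union_left,
      hA, fun _ ↦ le_rfl⟩⟩
  simp only [mem_filter, Fintype.mem_piFinset, mem_powerset] at hC hmax
  obtain ⟨hCAB, hCindep, hCcard⟩ := hC
  refine ⟨C, hCindep, hCAB, hCcard, fun i x hxB ↦ ?_⟩
  by_contra! hxC
  obtain ⟨U, hUC, hU, hCU, hoverlap⟩ := hCindep.exists_update (hf i) (hB i) hxB hxC
  have hUAB : U ⊆ A i ∪ B i :=
    hUC.trans (insert_subset (mem_union_right _ hxB) (hCAB i))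
  have hlt : ∑ j, #(C j ∩ B j) < ∑ j, #(Function.update C i U j ∩ B j) := by
    refine sum_lt_sum (fun j _ ↦ ?_) ⟨i, mem_univ i, by simpa using card_lt_card hoverlap⟩
    exact (Function.forall_update_iff C fun j S ↦ #(C j ∩ B j) ≤ #(S ∩ B j)).mpr
      ⟨(card_lt_card hoverlap).le, fun _ _ ↦ le_rfl⟩ j
  refine hlt.not_ge (hmax (Function.update C i U) ⟨?_, hU, ?_⟩)
  · exact (Function.forall_update_iff C fun j S ↦ S ⊆ A j ∪ B j).mpr
      ⟨hUAB, fun j _ ↦ hCAB j⟩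
  · exact (Function.forall_update_iff C fun j S ↦ #(A j) ≤ #S).mpr
      ⟨(hCcard i).trans hCU, fun j _ ↦ hCcard j⟩

lemma exists_card_le_and_sum_card_le (hf : ∀ i, IsMRF (f i)) (hA : IsIndepAllocation f A)
    (hB : IsIndepAllocation f B) (S : Finset (Fin n)) :
    ∃ C, IsIndepAllocation f C ∧ (∀ j ∈ S, #(A j) ≤ #(C j)) ∧
      ∑ j ∈ S, #(B j) ≤ ∑ j ∈ S, #(C j) := by
  have hrestrict (D : Fin n → Finset α) (j : Fin n) : S.piecewise D (fun _ ↦ ∅) j ⊆ D j :=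
    S.piecewise_cases D _ (· ⊆ D j) subset_rfl (empty_subset _)
  obtain ⟨C, hC, hCAB, hCcard, hcover⟩ := (hA.mono hf (hrestrict A)).exists_card_le_and_covers hf
    (hB.mono hf (hrestrict B)).isIndep
  have hC_empty : ∀ j ∉ S, C j = ∅ := fun j hj ↦ by simpa [hj] using hCAB j
  refine ⟨C, hC, fun j hj ↦ by simpa [hj] using hCcard j, ?_⟩
  rw [← card_biUnion fun i _ j _ ↦ hB.isAllocation i j,
    ← card_biUnion fun i _ j _ ↦ hC.isAllocation i j]
  refine card_le_card fun x hx ↦ ?_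
  obtain ⟨i, hi, hxB⟩ := mem_biUnion.mp hx
  obtain ⟨j, hxC⟩ := hcover i x (by simpa [hi] using hxB)
  have hj : j ∈ S := by_contra fun hj ↦ by simp [hC_empty j hj] at hxC
  exact mem_biUnion.mpr ⟨j, hj, hxC⟩

end IsIndepAllocation

end Allocation

section MaxWelfare

variable {α : Type*} [Fintype α]

lemma IsAllocation.sum_le_maxWelfare {A : Fin n → Finset α} (hA : IsAllocation A)
    (f : Fin n → Finset α → ℕ) (S : Finset (Fin n)) : ∑ j ∈ S, f j (A j) ≤ maxWelfare f S :=
  le_sup (f := fun B : Fin n → Finset α ↦ ∑ j ∈ S, f j (B j)) (by simpa using hA)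

variable [DecidableEq α] {f : Fin n → Finset α → ℕ}

lemma exists_isIndepAllocation_sum_card_eq_maxWelfare (hf : ∀ i, IsMRF (f i))
    (S : Finset (Fin n)) :
    ∃ A, IsIndepAllocation f A ∧ ∑ j ∈ S, #(A j) = maxWelfare f S := by
  obtain ⟨B, hB, hBmax⟩ := exists_mem_eq_sup {B : Fin n → Finset α | IsAllocation B}
    ⟨fun _ ↦ ∅, by simpa using isAllocation_empty⟩ (fun B ↦ ∑ j ∈ S, f j (B j))
  choose A _ hAB hAindep hAcard using fun i ↦
    (hf i).exists_basis_superset (hf i).isIndep_empty (empty_subset (B i))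
  refine ⟨A, ⟨(mem_filter.mp hB).2.mono hAB, hAindep⟩, ?_⟩
  rw [maxWelfare, hBmax]
  exact sum_congr rfl fun j _ ↦ hAcard j

lemma exists_isIndepAllocation_forall_maxWelfare_le (hf : ∀ i, IsMRF (f i))
    (𝒞 : Finset (Finset (Fin n))) (h𝒞 : IsChain (· ⊆ ·) (𝒞 : Set (Finset (Fin n)))) :
    ∃ A, IsIndepAllocation f A ∧ ∀ S ∈ 𝒞, maxWelfare f S ≤ ∑ j ∈ S, #(A j) := by
  induction 𝒞 using Finset.induction_on_max_value (fun S : Finset (Fin n) ↦ #S) with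
  | empty => exact ⟨fun _ ↦ ∅, ⟨isAllocation_empty, fun i ↦ (hf i).isIndep_empty⟩, by simp⟩
  | insert T 𝒞 _ hcard ih =>
    have hT : ∀ S ∈ 𝒞, S ⊆ T := fun S hS ↦
      (h𝒞.total (by simp [hS]) (by simp)).elim id
        fun hTS ↦ (eq_of_subset_of_card_le hTS (hcard S hS)).superset
    obtain ⟨A, hA, hAmax⟩ := ih (h𝒞.mono (by simp))
    obtain ⟨B, hB, hBmax⟩ := exists_isIndepAllocation_sum_card_eq_maxWelfare hf T
    obtain ⟨C, hC, hAC, hBC⟩ := hA.exists_card_le_and_sum_card_le hf hB T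
    refine ⟨C, hC, (forall_mem_insert _ _ _).mpr ⟨hBmax.ge.trans hBC, fun S hS ↦ ?_⟩⟩
    exact (hAmax S hS).trans (sum_le_sum fun j hj ↦ hAC j (hT S hS hj))

theorem greedy_prefix_welfare_general (hf : ∀ i, IsMRF (f i)) {𝒞 : Set (Finset (Fin n))}
    (h𝒞 : IsChain (· ⊆ ·) 𝒞) :
    ∃ A : Fin n → Finset α, IsAllocation A ∧ NonRedundant f A ∧
      ∀ S ∈ 𝒞, ∑ j ∈ S, #(A j) = maxWelfare f S := by
  obtain ⟨A, hA, hAmax⟩ := exists_isIndepAllocation_forall_maxWelfare_le hf 𝒞.toFinset (by simpa)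
  refine ⟨A, hA.isAllocation, hA.nonRedundant hf, fun S hS ↦ le_antisymm ?_ ?_⟩
  · calc ∑ j ∈ S, #(A j) = ∑ j ∈ S, f j (A j) := sum_congr rfl fun j _ ↦ (hA.isIndep j).symm
      _ ≤ maxWelfare f S := hA.isAllocation.sum_le_maxWelfare f S
  · exact hAmax S (Set.mem_toFinset.mpr hS)

end MaxWelfare

/-- The greedy lemma: for MRF valuations there is a single non-redundant allocation
that simultaneously attains the maximum welfare of every prefix of agents. -/
theorem greedy_prefix_welfare
    {n : ℕ} {I : Type*} [DecidableEq I] [Fintype I]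
    (f : Fin n → Finset I → ℕ) (hf : ∀ i, IsMRF (f i)) :
    ∃ A : Fin n → Finset I, IsAllocation A ∧ NonRedundant f A ∧
      ∀ i : Fin n,
        ∑ j ∈ Finset.univ.filter (fun j => j ≤ i), (A j).card
          = maxWelfare f (Finset.univ.filter (fun j => j ≤ i)) := by
  have hchain : Monotone fun i : Fin n ↦ univ.filter (fun j ↦ j ≤ i) :=
    fun _ _ hik ↦ monotone_filter_right univ fun _ _ hj ↦ hj.trans hik
  obtain ⟨A, hA, hAred, hAmax⟩ := greedy_prefix_welfare_general hf hchain.isChain_range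
  exact ⟨A, hA, hAred, fun i ↦ hAmax _ ⟨i, rfl⟩⟩
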